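/- Let E be a real Hilbert space, c ≥ 1, 1 < p ≤ 2 with conjugate exponent p* = p/(p−1), and let u = (u_1,…,u_c) ∈ E^c with u ≠ 0. Define w = (w_1,…,w_c) ∈ E^c by w_j = (Σ_{j̃=1}^c ‖u_{j̃}‖^{p*})^{(2/p*)−1} · ‖u_j‖^{p*−2} · u_j (with the convention that ‖u_j‖^{p*−2} u_j = 0 when u_j = 0). Then w is a maximizer over E^c of the concave function v ↦ Σ_{j=1}^c ⟨v_j, u_j⟩ − (1/2)‖v‖_{2,p}², and the maximum value equals (1/2)‖u‖_{2,p*}²; i.e., the Fenchel conjugate of (1/2)‖·‖_{2,p}² evaluated at u equals (1/2)‖u‖_{2,p*}² and is attained at w. -/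

import Mathlib

open RealInnerProductSpace

/-- The `ℓ_{2,p}` block norm `‖w‖_{2,p} = (Σ_j ‖w_j‖^p)^{1/p}` on `E^c`. -/
noncomputable def norm2p {E : Type*} [NormedAddCommGroup E] {c : ℕ}
    (p : ℝ) (w : Fin c → E) : ℝ :=
  (∑ j, ‖w j‖ ^ p) ^ (1 / p)

/-- The candidate maximizer of the representer theorem:
`w_j = (Σ_{j̃} ‖u_{j̃}‖^{p*})^{2/p* - 1} ‖u_j‖^{p*-2} u_j` with `p* = p/(p-1)`. -/
noncomputable def reprW {E : Type*} [NormedAddCommGroup E] [InnerProductSpace ℝ E] {c : ℕ}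
    (p : ℝ) (u : Fin c → E) : Fin c → E :=
  fun j =>
    ((∑ j' : Fin c, ‖u j'‖ ^ (p / (p - 1))) ^ (2 / (p / (p - 1)) - 1) *
      ‖u j‖ ^ (p / (p - 1) - 2)) • u j

/-! A Hilbert-valued `ℓ_p` space pairs with its conjugate `ℓ_q` space so that
`∑ i, ⟪v i, u i⟫ ≤ ‖v‖ * ‖u‖` (Hölder), and `‖v‖ * ‖u‖ ≤ ‖v‖ ^ 2 / 2 + ‖u‖ ^ 2 / 2` (Young).
Both become equalities when `v` is the image of `u` under the duality map, a vector of norm `‖u‖`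
whose pairing with `u` is `‖u‖ ^ 2`. The power of the sum in `reprW` is the homogeneity factor
`‖u‖ ^ (2 - q)` of this map. -/

open WithLp

section DualityMap

variable {ι : Type*} [Fintype ι] {E : ι → Type*} [∀ i, NormedAddCommGroup (E i)] {p q : ℝ}

lemma norm_eq_sum_rpow (hp : 0 < p) (v : PiLp (.ofReal p) E) :
    ‖v‖ = (∑ i, ‖v i‖ ^ p) ^ (1 / p) := by
  have hp' : (ENNReal.ofReal p).toReal = p := ENNReal.toReal_ofReal hp.le
  rw [PiLp.norm_eq_sum (hp'.symm ▸ hp), hp']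

lemma norm_nonneg_of_exponent_pos (hp : 0 < p) (v : PiLp (.ofReal p) E) : 0 ≤ ‖v‖ := by
  rw [norm_eq_sum_rpow hp]
  positivity

lemma norm_rpow_eq_sum (hp : 0 < p) (v : PiLp (.ofReal p) E) :
    ‖v‖ ^ p = ∑ i, ‖v i‖ ^ p := by
  rw [norm_eq_sum_rpow hp, one_div, Real.rpow_inv_rpow (by positivity) hp.ne']

variable [∀ i, InnerProductSpace ℝ (E i)]

lemma sum_inner_le_norm_mul_norm (hpq : p.HolderConjugate q)
    (v : PiLp (.ofReal p) E) (u : PiLp (.ofReal q) E) :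
    ∑ i, ⟪v i, u i⟫ ≤ ‖v‖ * ‖u‖ := by
  calc ∑ i, ⟪v i, u i⟫ ≤ ∑ i, ‖v i‖ * ‖u i‖ :=
        Finset.sum_le_sum fun i _ ↦ real_inner_le_norm (v i) (u i)
    _ ≤ (∑ i, ‖v i‖ ^ p) ^ (1 / p) * (∑ i, ‖u i‖ ^ q) ^ (1 / q) :=
        Real.inner_le_Lp_mul_Lq_of_nonneg Finset.univ hpq
          (fun i _ ↦ norm_nonneg (v i)) (fun i _ ↦ norm_nonneg (u i))
    _ = ‖v‖ * ‖u‖ := by rw [norm_eq_sum_rpow hpq.pos, norm_eq_sum_rpow hpq.symm.pos]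

/-- The normalized duality map from `ℓ_q` to `ℓ_p`, for conjugate exponents `p` and `q`: it sends
`u` to the vector that attains Hölder's inequality against `u` and has the same norm. At `u i = 0`
the `i`-th block is `0`, whatever the value of the real power in front. -/
noncomputable def dualityMap (p q : ℝ) (u : PiLp (.ofReal q) E) : PiLp (.ofReal p) E :=
  toLp _ fun i ↦ (‖u‖ ^ (2 - q) * ‖u i‖ ^ (q - 2)) • u i

lemma inner_dualityMap_apply (hq : q ≠ 0) (u : PiLp (.ofReal q) E) (i : ι) :
    ⟪dualityMap p q u i, u i⟫ = ‖u‖ ^ (2 - q) * ‖u i‖ ^ q := by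
  have hpow : ‖u i‖ ^ q = ‖u i‖ ^ (q - 2) * ‖u i‖ ^ (2 : ℝ) :=
    Real.rpow_of_add_eq (norm_nonneg _) hq (sub_add_cancel q 2)
  simp only [dualityMap, real_inner_smul_left, real_inner_self_eq_norm_sq, hpow, Real.rpow_two,
    mul_assoc]

lemma sum_inner_dualityMap (hq : 0 < q) (u : PiLp (.ofReal q) E) :
    ∑ i, ⟪dualityMap p q u i, u i⟫ = ‖u‖ ^ 2 := by
  simp only [inner_dualityMap_apply hq.ne', ← Finset.mul_sum, ← norm_rpow_eq_sum hq]
  rw [← Real.rpow_two, Real.rpow_of_add_eq (norm_nonneg_of_exponent_pos hq u) two_ne_zero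
    (sub_add_cancel 2 q)]

lemma norm_dualityMap_apply (hq : 1 < q) (u : PiLp (.ofReal q) E) (i : ι) :
    ‖dualityMap p q u i‖ = ‖u‖ ^ (2 - q) * ‖u i‖ ^ (q - 1) := by
  have hu : 0 ≤ ‖u‖ := norm_nonneg_of_exponent_pos (by linarith) u
  have hpow : ‖u i‖ ^ (q - 1) = ‖u i‖ ^ (q - 2) * ‖u i‖ ^ (1 : ℝ) :=
    Real.rpow_of_add_eq (norm_nonneg _) (sub_ne_zero.mpr hq.ne') (by ring)
  rw [dualityMap, PiLp.toLp_apply, norm_smul, Real.norm_of_nonneg (by positivity), hpow,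
    Real.rpow_one, mul_assoc]

lemma norm_dualityMap (hpq : p.HolderConjugate q) (u : PiLp (.ofReal q) E) :
    ‖dualityMap p q u‖ = ‖u‖ := by
  have hu : 0 ≤ ‖u‖ := norm_nonneg_of_exponent_pos hpq.symm.pos u
  have hexp : (2 - q) * p + q = p := by linear_combination -hpq.mul_eq_add
  rw [← Real.rpow_left_inj (norm_nonneg_of_exponent_pos hpq.pos _) hu hpq.ne_zero]
  calc ‖dualityMap p q u‖ ^ p = ∑ i, (‖u‖ ^ (2 - q) * ‖u i‖ ^ (q - 1)) ^ p := by
        simp only [norm_rpow_eq_sum hpq.pos, norm_dualityMap_apply hpq.symm.lt]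
    _ = ∑ i, ‖u‖ ^ ((2 - q) * p) * ‖u i‖ ^ q := by
        refine Finset.sum_congr rfl fun i _ ↦ ?_
        rw [Real.mul_rpow (by positivity) (by positivity), ← Real.rpow_mul hu,
          ← Real.rpow_mul (norm_nonneg _), hpq.symm.sub_one_mul_conj]
    _ = ‖u‖ ^ ((2 - q) * p) * ‖u‖ ^ q := by
        rw [← Finset.mul_sum, norm_rpow_eq_sum hpq.symm.pos]
    _ = ‖u‖ ^ p := (Real.rpow_of_add_eq hu hpq.ne_zero hexp).symm

theorem representer_theorem_lp_general (hpq : p.HolderConjugate q) (u : PiLp (.ofReal q) E) :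
    (∀ v : PiLp (.ofReal p) E,
      (∑ i, ⟪v i, u i⟫) - (1 / 2) * ‖v‖ ^ 2 ≤
        (∑ i, ⟪dualityMap p q u i, u i⟫) - (1 / 2) * ‖dualityMap p q u‖ ^ 2) ∧
    (∑ i, ⟪dualityMap p q u i, u i⟫) - (1 / 2) * ‖dualityMap p q u‖ ^ 2 =
      (1 / 2) * ‖u‖ ^ 2 := by
  have hvalue : (∑ i, ⟪dualityMap p q u i, u i⟫) - (1 / 2) * ‖dualityMap p q u‖ ^ 2 =
      (1 / 2) * ‖u‖ ^ 2 := by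
    rw [sum_inner_dualityMap hpq.symm.pos, norm_dualityMap hpq]
    ring
  refine ⟨fun v ↦ ?_, hvalue⟩
  have hholder := sum_inner_le_norm_mul_norm hpq v u
  have hyoung := two_mul_le_add_sq ‖v‖ ‖u‖
  linarith

end DualityMap

section BlockNorm

variable {E : Type*} [NormedAddCommGroup E] {c : ℕ} {p : ℝ}

lemma norm2p_eq_norm_toLp (hp : 0 < p) (w : Fin c → E) :
    norm2p p w = ‖toLp (.ofReal p) w‖ :=
  (norm_eq_sum_rpow hp (toLp _ w)).symm

lemma toLp_reprW [InnerProductSpace ℝ E] (hp : 1 < p) (u : Fin c → E) :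
    toLp (.ofReal p) (reprW p u) = dualityMap p (p / (p - 1)) (toLp _ u) := by
  have hq : 0 < p / (p - 1) := (Real.HolderConjugate.conjExponent hp).symm.pos
  unfold reprW dualityMap
  generalize p / (p - 1) = q at hq ⊢
  have hexp : 1 / q * (2 - q) = 2 / q - 1 := by field_simp
  rw [norm_eq_sum_rpow hq, ← Real.rpow_mul (by positivity), hexp]

end BlockNorm

/-- **Representer theorem** (Theorem 4): `w = reprW p u` maximizes
`v ↦ Σ_j ⟪v_j, u_j⟫ - (1/2)‖v‖_{2,p}²` over `E^c`, and the maximum value is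
`(1/2)‖u‖_{2,p*}²`, i.e. the Fenchel conjugate of `(1/2)‖·‖_{2,p}²` at `u` equals
`(1/2)‖u‖_{2,p*}²` and is attained at `w`. -/
theorem representer_theorem_lp {E : Type*} [NormedAddCommGroup E] [InnerProductSpace ℝ E]
    (c : ℕ) (hc : 1 ≤ c) (p : ℝ) (hp₁ : 1 < p) (hp₂ : p ≤ 2)
    (u : Fin c → E) (hu : u ≠ 0) :
    (∀ v : Fin c → E,
      (∑ j, ⟪v j, u j⟫) - (1 / 2) * (norm2p p v) ^ 2 ≤
        (∑ j, ⟪reprW p u j, u j⟫) - (1 / 2) * (norm2p p (reprW p u)) ^ 2) ∧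
    (∑ j, ⟪reprW p u j, u j⟫) - (1 / 2) * (norm2p p (reprW p u)) ^ 2 =
      (1 / 2) * (norm2p (p / (p - 1)) u) ^ 2 := by
  have hpq : p.HolderConjugate (p / (p - 1)) := .conjExponent hp₁
  have h := representer_theorem_lp_general hpq (toLp _ u)
  rw [← toLp_reprW hp₁] at h
  simp only [norm2p_eq_norm_toLp hpq.pos, norm2p_eq_norm_toLp hpq.symm.pos]
  exact ⟨fun v ↦ h.1 (toLp _ v), h.2⟩
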